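/- For any two distinct computable real numbers a, b ∈ (0,1], the sets S_a = {T ∈ (0,1) | Z(aT) is computable} and S_b = {T ∈ (0,1) | Z(bT) is computable} are disjoint. -/

import Mathlib

open Filter

/-- A real number `α` is computable if some total recursive `f : ℕ+ → ℚ`
satisfies `|α - f n| < 1/n` for all `n`. -/
def ComputableReal (α : ℝ) : Prop :=
  ∃ f : ℕ+ → ℚ, Computable f ∧ ∀ n : ℕ+, |α - (f n : ℝ)| < 1 / (n : ℝ)

/-- A partial function on binary strings has prefix-free domain. -/
def PrefixFree (C : List Bool →. List Bool) : Prop :=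
  ∀ p q : List Bool, (C p).Dom → (C q).Dom → p <+: q → p = q

/-- `U` is an optimal prefix-free machine (universal self-delimiting Turing machine). -/
def OptimalMachine (U : List Bool →. List Bool) : Prop :=
  Partrec U ∧ PrefixFree U ∧
    ∀ C : List Bool →. List Bool, Partrec C → PrefixFree C →
      ∃ d : ℕ, ∀ p s, s ∈ C p → ∃ p', s ∈ U p' ∧ p'.length ≤ p.length + d

/-- Program-size (prefix-free Kolmogorov) complexity of `s` with respect to `U`. -/
noncomputable def complexity (U : List Bool →. List Bool) (s : List Bool) : ℕ :=
  sInf {n | ∃ p : List Bool, p.length = n ∧ s ∈ U p}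

/-- The `i`-th bit (0-indexed) of the base-two expansion of the fractional part
of `α`, in the expansion with infinitely many zeros. -/
noncomputable def bitOf (α : ℝ) (i : ℕ) : Bool := decide (⌊Int.fract α * 2 ^ (i + 1)⌋ % 2 = 1)

/-- The first `n` bits of the base-two expansion of `α - ⌊α⌋`
(with infinitely many zeros). -/
noncomputable def firstBits (α : ℝ) (n : ℕ) : List Bool := (List.range n).map (bitOf α)

/-- `α` is weakly Chaitin `T`-random: `∃ c, ∀ n, T·n − c ≤ H(α_n)`. -/
def WeaklyChaitinTRandom (U : List Bool →. List Bool) (T α : ℝ) : Prop :=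
  ∃ c : ℕ, ∀ n : ℕ+, T * (n : ℝ) - (c : ℝ) ≤ (complexity U (firstBits α n) : ℝ)

/-- `α` is `T`-compressible: `limsup H(α_n)/n ≤ T`. -/
def TCompressible (U : List Bool →. List Bool) (T α : ℝ) : Prop :=
  Filter.limsup (fun n : ℕ => (complexity U (firstBits α n) : ℝ) / (n : ℝ)) atTop ≤ T

/-- The partition function `Z(T) = ∑_{p ∈ dom U} 2^{-|p|/T}`. -/
noncomputable def Zfun (U : List Bool →. List Bool) (T : ℝ) : ℝ :=
  ∑' p : {p : List Bool // (U p).Dom}, (2 : ℝ) ^ (-((p : List Bool).length : ℝ) / T)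

/-- The free energy `F(T) = -T log₂ Z(T)`. -/
noncomputable def Ffun (U : List Bool →. List Bool) (T : ℝ) : ℝ :=
  -T * Real.logb 2 (Zfun U T)

open Encodable in
/-- The explicit pairing code of a rational number. -/
def encRat (q : ℚ) : ℕ := Nat.pair (encode q.num) q.den

theorem primrec_succPNat : Primrec Nat.succPNat := by
  rw [← Primrec.encode_iff]
  exact Primrec.id.of_eq fun n => rfl

theorem primrecRel_coprime : PrimrecRel (fun a b : ℕ => 0 < b ∧ Nat.Coprime a b) := by
  have hR : PrimrecRel (fun (d : ℕ) (p : ℕ × ℕ) => ¬ (2 ≤ d ∧ p.1 % d = 0 ∧ p.2 % d = 0)) := by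
    refine PrimrecPred.not ((Primrec.nat_le.comp (Primrec.const 2) Primrec.fst).and
      (PrimrecPred.and ?_ ?_))
    · exact Primrec.eq.comp (Primrec.nat_mod.comp (Primrec.fst.comp Primrec.snd) Primrec.fst)
        (Primrec.const 0)
    · exact Primrec.eq.comp (Primrec.nat_mod.comp (Primrec.snd.comp Primrec.snd) Primrec.fst)
        (Primrec.const 0)
  have h3 : PrimrecPred (fun p : ℕ × ℕ =>
      ∀ d < p.2 + 1, ¬ (2 ≤ d ∧ p.1 % d = 0 ∧ p.2 % d = 0)) :=
    PrimrecPred.of_eq (hR.forall_mem_list.comp (Primrec.list_range.comp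
      (Primrec.succ.comp Primrec.snd)) (Primrec.id (α := ℕ × ℕ))) (by simp)
  have h2 : PrimrecPred (fun p : ℕ × ℕ => 0 < p.2 ∧
      ∀ d < p.2 + 1, ¬ (2 ≤ d ∧ p.1 % d = 0 ∧ p.2 % d = 0)) :=
    (Primrec.nat_lt.comp (Primrec.const 0) Primrec.snd).and
      h3
  refine PrimrecPred.of_eq h2 ?_
  rintro ⟨a, b⟩
  simp only
  refine and_congr_right fun hb => ⟨fun h => ?_, fun h d hd => ?_⟩
  · by_contra hc
    have hpos : 0 < Nat.gcd a b := Nat.gcd_pos_of_pos_right _ hb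
    have hne : Nat.gcd a b ≠ 1 := hc
    refine h (Nat.gcd a b) (Nat.lt_succ_of_le (Nat.gcd_le_right _ hb)) ⟨by omega, ?_, ?_⟩
    · exact Nat.mod_eq_zero_of_dvd (Nat.gcd_dvd_left _ _)
    · exact Nat.mod_eq_zero_of_dvd (Nat.gcd_dvd_right _ _)
  · rintro ⟨h2, h3, h4⟩
    have : d ∣ Nat.gcd a b := Nat.dvd_gcd (Nat.dvd_of_mod_eq_zero h3) (Nat.dvd_of_mod_eq_zero h4)
    rw [h] at this
    have := Nat.le_of_dvd one_pos this
    omega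

theorem natAbs_eq_encode (z : ℤ) : z.natAbs = (Encodable.encode z + 1) / 2 := by
  cases z with
  | ofNat n =>
    have : Encodable.encode (Int.ofNat n) = 2 * n := rfl
    rw [this, Int.ofNat_eq_natCast, Int.natAbs_natCast]; omega
  | negSucc n =>
    have : Encodable.encode (Int.negSucc n) = 2 * n + 1 := rfl
    rw [this, Int.natAbs_negSucc]; omega

theorem toNat_eq_encode (z : ℤ) :
    z.toNat = if Encodable.encode z % 2 = 0 then Encodable.encode z / 2 else 0 := by
  cases z with
  | ofNat n =>
    have : Encodable.encode (Int.ofNat n) = 2 * n := rfl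
    rw [this]; simp
  | negSucc n =>
    have : Encodable.encode (Int.negSucc n) = 2 * n + 1 := rfl
    rw [this, Int.toNat_negSucc, if_neg (by omega)]

theorem mem_range_encRat (m : ℕ) : m ∈ Set.range encRat ↔
    (0 < m.unpair.2 ∧ Nat.Coprime ((m.unpair.1 + 1) / 2) m.unpair.2) := by
  constructor
  · rintro ⟨q, rfl⟩
    simp only [encRat, Nat.unpair_pair]
    exact ⟨q.pos, by rw [← natAbs_eq_encode]; exact q.reduced⟩
  · rintro ⟨h1, h2⟩
    have h3 : Encodable.encode (Denumerable.ofNat ℤ m.unpair.1) = m.unpair.1 :=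
      Denumerable.encode_ofNat _
    refine ⟨⟨Denumerable.ofNat ℤ m.unpair.1, m.unpair.2, h1.ne', ?_⟩, ?_⟩
    · rw [natAbs_eq_encode, h3]; exact h2
    · simp only [encRat, h3, Nat.pair_unpair]

theorem primrecPred_range_encRat : PrimrecPred (fun m => m ∈ Set.range encRat) := by
  refine PrimrecPred.of_eq (primrecRel_coprime.comp
    (Primrec.nat_div.comp (Primrec.succ.comp (Primrec.fst.comp Primrec.unpair)) (Primrec.const 2))
    (Primrec.snd.comp Primrec.unpair)) fun m => (mem_range_encRat m).symm

open Classical in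
theorem encode_rat_eq (q : ℚ) :
    @Encodable.encode ℚ Primcodable.toEncodable q = Nat.count (fun n => n ∈ Set.range encRat) (encRat q) := by
  unfold Nat.count
  show List.countP _ (List.range (encRat q)) = _
  congr
  funext x
  congr

open Classical in
theorem computable_encRat : Computable encRat := by
  have hcount : Primrec (Nat.count (fun n => n ∈ Set.range encRat)) := by
    have := Primrec.list_length.comp
      ((Primrec.listFilter primrecPred_range_encRat).comp Primrec.list_range)
    refine this.of_eq fun n => ?_
    rw [Nat.count, List.countP_eq_length_filter]
  have hP : PrimrecRel (fun (q : ℚ) (m : ℕ) => m ∈ Set.range encRat ∧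
      Nat.count (fun n => n ∈ Set.range encRat) m = @Encodable.encode ℚ Primcodable.toEncodable q) :=
    (primrecPred_range_encRat.comp Primrec.snd).and
      (Primrec.eq.comp (hcount.comp Primrec.snd) (Primrec.encode.comp Primrec.fst))
  have h1 := Partrec.rfind (p := fun (q : ℚ) (m : ℕ) => Part.some (decide
    (m ∈ Set.range encRat ∧
      Nat.count (fun n => n ∈ Set.range encRat) m = @Encodable.encode ℚ Primcodable.toEncodable q))) hP.decide.to_comp.partrec₂
  refine Partrec.of_eq h1 fun q => ?_
  rw [PFun.coe_val, Part.eq_some_iff]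
  refine Nat.mem_rfind.2 ⟨by simp [encode_rat_eq q], fun {m} hm => ?_⟩
  simp only [Part.mem_some_iff, eq_comm (a := false), decide_eq_false_iff_not]
  rintro ⟨h2, h3⟩
  rw [encode_rat_eq] at h3
  exact (Nat.count_strict_mono h2 hm).ne h3

theorem computable_num_den : Computable (fun q : ℚ => (q.num.toNat, q.den)) := by
  have h : Primrec (fun m : ℕ => ((if m.unpair.1 % 2 = 0 then m.unpair.1 / 2 else 0), m.unpair.2)) := by
    refine Primrec.pair (Primrec.ite ?_ ?_ (Primrec.const 0)) (Primrec.snd.comp Primrec.unpair)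
    · exact Primrec.eq.comp (Primrec.nat_mod.comp (Primrec.fst.comp Primrec.unpair)
        (Primrec.const 2)) (Primrec.const 0)
    · exact Primrec.nat_div.comp (Primrec.fst.comp Primrec.unpair) (Primrec.const 2)
  refine (h.to_comp.comp computable_encRat).of_eq fun q => ?_
  simp only [encRat, Nat.unpair_pair, toNat_eq_encode]

/-- A nonnegative computable real has a computable sequence of natural approximations. -/
theorem ComputableReal.exists_approx {α : ℝ} (h : ComputableReal α) (h0 : 0 ≤ α) :
    ∃ g : ℕ → ℕ, Computable g ∧ ∀ N : ℕ, (g N : ℝ) ≤ α * (N + 1) + 2 ∧ α * (N + 1) ≤ g N + 2 := by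
  obtain ⟨f, hf, hfa⟩ := h
  have hc : Computable (fun N : ℕ => ((f N.succPNat).num.toNat, (f N.succPNat).den)) :=
    computable_num_den.comp (hf.comp primrec_succPNat.to_comp)
  refine ⟨fun N => (f N.succPNat).num.toNat * (N + 1) / (f N.succPNat).den, ?_, fun N => ?_⟩
  · exact Primrec.nat_div.to_comp.comp (Primrec.nat_mul.to_comp.comp (Computable.fst.comp hc)
      Primrec.succ.to_comp) (Computable.snd.comp hc)
  have h1 := hfa N.succPNat
  set q := f N.succPNat with hq
  have hN : ((N.succPNat : ℕ+) : ℝ) = N + 1 := by simp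
  have hN' : (0:ℝ) < N + 1 := by positivity
  rw [hN, lt_div_iff₀ hN', show |α - (q:ℝ)| * ((N:ℝ) + 1) = |(α - q) * (N + 1)| by
    rw [abs_mul, abs_of_pos hN'], abs_lt] at h1
  have hden : (0:ℝ) < q.den := by exact_mod_cast q.pos
  set A := q.num.toNat * (N + 1) with hA
  have hfl1 : ((A / q.den : ℕ) : ℝ) * q.den ≤ A := by
    exact_mod_cast Nat.div_mul_le_self A q.den
  have hfl2 : (A : ℝ) < (((A / q.den : ℕ) : ℝ) + 1) * q.den := by
    have h := Nat.lt_mul_div_succ A q.pos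
    have : A < (A / q.den + 1) * q.den := by rw [mul_comm]; exact h
    exact_mod_cast this
  have hAq : (A : ℝ) = (q.num.toNat : ℝ) * (N + 1) := by rw [hA]; push_cast; ring
  have hqr : (q : ℝ) = q.num / q.den := by exact_mod_cast (Rat.num_div_den q).symm
  have hqd : (q : ℝ) * q.den = q.num := by rw [hqr]; field_simp
  show ((A / q.den : ℕ) : ℝ) ≤ α * (N + 1) + 2 ∧ α * (N + 1) ≤ ((A / q.den : ℕ) : ℝ) + 2
  rcases le_total 0 q.num with hn | hn
  · have hz : ((q.num.toNat : ℕ) : ℝ) = (q.num : ℝ) := by exact_mod_cast Int.toNat_of_nonneg hn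
    rw [hAq, hz, ← hqd] at hfl1 hfl2
    have e1 : ((A / q.den : ℕ) : ℝ) ≤ q * (N + 1) := by
      refine le_of_mul_le_mul_right ?_ hden; linarith
    have e2 : (q : ℝ) * (N + 1) < ((A / q.den : ℕ) : ℝ) + 1 := by
      refine lt_of_mul_lt_mul_right ?_ hden.le; linarith
    constructor <;> nlinarith
  · have hz : q.num.toNat = 0 := Int.toNat_of_nonpos hn
    have hA0 : A = 0 := by rw [hA, hz, zero_mul]
    have hq0 : (q : ℝ) ≤ 0 := by exact_mod_cast Rat.num_nonpos.1 hn
    have : (q : ℝ) * (N + 1) ≤ 0 := mul_nonpos_of_nonpos_of_nonneg hq0 hN'.le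
    rw [hA0]
    have := mul_nonneg h0 hN'.le
    constructor <;> simp <;> nlinarith
section Analysis

open Filter Topology

theorem pow_convex_bound {e s : ℝ} (he : 0 ≤ e) (hs : e ≤ s) (hs2 : s ≤ 1 / 2) (he2 : e < 1 / 2)
    (l : ℕ) : s ^ l ≤ e ^ l + (s - e) / (1 / 2 - e) * (1 / 2) ^ l := by
  have hd : 0 < 1 / 2 - e := by linarith
  set t := (s - e) / (1 / 2 - e) with ht
  have ht0 : 0 ≤ t := div_nonneg (by linarith) hd.le
  have ht1 : t ≤ 1 := by rw [ht, div_le_one hd]; linarith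
  have hse : s = (1 - t) * e + t * (1 / 2) := by
    have : t * (1 / 2 - e) = s - e := div_mul_cancel₀ _ hd.ne'
    linarith
  have hcv : ConvexOn ℝ (Set.Ici (0 : ℝ)) fun y : ℝ => y ^ l := convexOn_pow l
  have h12 : (1 / 2 : ℝ) ∈ Set.Ici (0 : ℝ) := by norm_num
  have := hcv.2 (Set.mem_Ici.2 he) h12 (sub_nonneg.2 ht1) ht0 (by ring)
  simp only [smul_eq_mul] at this
  rw [← hse] at this
  have h3 : 0 ≤ t * e ^ l := by positivity
  linarith

variable {ι : Type*} {len : ι → ℕ}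

theorem summable_of_le_half (hs : Summable fun p => (1 / 2 : ℝ) ^ len p) {t : ℝ} (h0 : 0 ≤ t)
    (h1 : t ≤ 1 / 2) : Summable fun p => t ^ len p :=
  Summable.of_nonneg_of_le (fun p => by positivity) (fun p => pow_le_pow_left₀ h0 h1 _) hs

theorem soundness (hs : Summable fun p => (1 / 2 : ℝ) ^ len p) (p0 : ι) (hp0 : 1 ≤ len p0)
    {x e a b : ℝ} (hx : 0 < x) (hxe : x < e) (he : e < 1 / 2) (ha : 0 < a) (hab : a < b)
    (hrel : x ^ (a / b) = e) {K M : ℕ} (hK : 1 ≤ K) (hM : 1 ≤ M)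
    (h1 : x ^ M ≤ (1 / 2) ^ K) (h2 : (1 / 2 : ℝ) ^ K < e ^ (M + 1)) (d : ℕ) :
    ∃ j0 : ℕ, ∀ j ≥ j0, ∀ (F : Finset ι) (r s : ℝ) (u v : ℕ), 0 ≤ r → 0 ≤ s → 0 < v →
      (∑' p, (1 / 2 : ℝ) ^ len p) ≤ ∑ p ∈ F, (1 / 2 : ℝ) ^ len p + (1 / 2) ^ (M * j) →
      ∑ p ∈ F, r ^ len p ≤ (∑' p, x ^ len p) + (1 / 2) ^ (K * j) →
      s ^ v ≤ r ^ u → a * v ≤ b * u →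
      (∑' p, e ^ len p) ≤ ∑ p ∈ F, s ^ len p →
      ∀ p, p ∉ F → (M + 1) * j + 1 + d < len p := by
  classical
  have hb : 0 < b := ha.trans hab
  have he0 : 0 < e := hx.trans hxe
  have hd : 0 < 1 / 2 - e := by linarith
  set W := ∑' p, (1 / 2 : ℝ) ^ len p with hW
  have hsx := summable_of_le_half hs hx.le (hxe.le.trans he.le)
  have hse := summable_of_le_half hs he0.le he.le
  set C1 : ℝ := 2 / x ^ (len p0 - 1) with hC1
  have hC1p : 0 < C1 := by positivity
  set C2 : ℝ := e * (a / b) * C1 / x with hC2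
  have hC2p : 0 < C2 := by positivity
  set C3 : ℝ := C2 / (1 / 2 - e) * W with hC3
  -- eventual conditions
  have hlim : Tendsto (fun j : ℕ => (1 / 2 : ℝ) ^ (K * j)) atTop (𝓝 0) := by
    have : Tendsto (fun j : ℕ => ((1 / 2 : ℝ) ^ K) ^ j) atTop (𝓝 0) :=
      tendsto_pow_atTop_nhds_zero_of_lt_one (by positivity)
        (pow_lt_one₀ (by norm_num) (by norm_num) (by omega))
    simpa [pow_mul] using this
  have ev1 : ∀ᶠ j : ℕ in atTop, x + C1 * (1 / 2 : ℝ) ^ (K * j) < 1 := by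
    have : Tendsto (fun j : ℕ => x + C1 * (1 / 2 : ℝ) ^ (K * j)) atTop (𝓝 (x + C1 * 0)) :=
      (hlim.const_mul C1).const_add x
    exact this.eventually_lt_const (by linarith)
  have ev2 : ∀ᶠ j : ℕ in atTop, e + C2 * (1 / 2 : ℝ) ^ (K * j) < 1 / 2 := by
    have : Tendsto (fun j : ℕ => e + C2 * (1 / 2 : ℝ) ^ (K * j)) atTop (𝓝 (e + C2 * 0)) :=
      (hlim.const_mul C2).const_add e
    exact this.eventually_lt_const (by linarith)
  have ev3 : ∀ᶠ j : ℕ in atTop, len p0 < M * j := by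
    filter_upwards [eventually_gt_atTop (len p0)] with j hj
    nlinarith
  have ev4 : ∀ᶠ j : ℕ in atTop, C3 * (1 / 2 : ℝ) ^ (K * j) < e ^ ((M + 1) * j + 1 + d) := by
    have hq : Tendsto (fun j : ℕ => C3 * ((1 / 2 : ℝ) ^ K / e ^ (M + 1)) ^ j) atTop (𝓝 (C3 * 0)) :=
      (tendsto_pow_atTop_nhds_zero_of_lt_one (by positivity)
        ((div_lt_one (by positivity)).2 h2)).const_mul C3
    filter_upwards [hq.eventually_lt_const (u := e ^ (1 + d)) (by rw [mul_zero]; positivity)]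
      with j hj
    have hpos : 0 < (e ^ (M + 1)) ^ j := by positivity
    rw [div_pow, ← mul_div_assoc, div_lt_iff₀ hpos] at hj
    calc C3 * (1 / 2 : ℝ) ^ (K * j) = C3 * ((1 / 2 : ℝ) ^ K) ^ j := by rw [pow_mul]
      _ < _ := hj
      _ = _ := by rw [← pow_mul, ← pow_add]; congr 1; ring
  obtain ⟨j0, hj0⟩ := eventually_atTop.1 ((ev1.and ev2).and (ev3.and ev4))
  refine ⟨j0, fun j hj F r s u v hr hs0 hv c1 c2 c3 c4 c5 p hp => ?_⟩
  obtain ⟨⟨e1, e2⟩, e3, e4⟩ := hj0 j hj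
  set ε : ℝ := (1 / 2 : ℝ) ^ (K * j) with hε
  have hεp : 0 < ε := by positivity
  -- tails
  have split : ∀ t : ℝ, (Summable fun p => t ^ len p) →
      ∑ p ∈ F, t ^ len p + ∑' p : {p // p ∉ F}, t ^ len (p : ι) = ∑' p, t ^ len p :=
    fun t ht => ht.sum_add_tsum_subtype_compl F
  have tail1 : ∑' p : {p // p ∉ F}, (1 / 2 : ℝ) ^ len (p : ι) ≤ (1 / 2) ^ (M * j) := by
    have := split _ hs
    linarith
  have subs : ∀ t : ℝ, (Summable fun p => t ^ len p) →
      Summable (fun p : {p // p ∉ F} => t ^ len (p : ι)) := fun t ht => ht.subtype {p | p ∉ F}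
  have single : ∀ t : ℝ, 0 ≤ t → (Summable fun p => t ^ len p) → ∀ q, q ∉ F →
      t ^ len q ≤ ∑' p : {p // p ∉ F}, t ^ len (p : ι) := fun t h0 ht q hq =>
    (subs t ht).le_tsum (⟨q, hq⟩ : {p // p ∉ F}) (fun _ _ => by positivity)
  have long : ∀ q, q ∉ F → M * j ≤ len q := fun q hq => by
    have h := (single _ (by norm_num) hs q hq).trans tail1
    by_contra hc
    push Not at hc
    exact absurd h (not_le.2 (pow_lt_pow_right_of_lt_one₀ (by norm_num) (by norm_num) hc))
  have hp0F : p0 ∈ F := by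
    by_contra hc
    have := long p0 hc
    omega
  have tailx : ∑' p : {p // p ∉ F}, x ^ len (p : ι) ≤ ε := by
    have hle : ∀ q : {p // p ∉ F}, x ^ len (q : ι) ≤ (2 * x) ^ (M * j) * (1 / 2) ^ len (q : ι) := by
      intro q
      have : x ^ len (q : ι) = (2 * x) ^ len (q : ι) * (1 / 2) ^ len (q : ι) := by
        rw [← mul_pow]; congr 1; ring
      rw [this]
      refine mul_le_mul_of_nonneg_right ?_ (by positivity)
      exact pow_le_pow_of_le_one (by positivity) (by linarith) (long q q.2)
    calc ∑' p : {p // p ∉ F}, x ^ len (p : ι)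
        ≤ ∑' p : {p // p ∉ F}, (2 * x) ^ (M * j) * (1 / 2) ^ len (p : ι) :=
          (subs x hsx).tsum_le_tsum hle ((subs _ hs).mul_left _)
      _ = (2 * x) ^ (M * j) * ∑' p : {p // p ∉ F}, (1 / 2) ^ len (p : ι) := tsum_mul_left
      _ ≤ (2 * x) ^ (M * j) * (1 / 2) ^ (M * j) := by gcongr
      _ = (x ^ M) ^ j := by rw [← mul_pow, ← pow_mul]; congr 1; ring
      _ ≤ ((1 / 2) ^ K) ^ j := by gcongr
      _ = ε := by rw [hε, pow_mul]
  have hrx : r ≤ x + C1 * ε := by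
    by_contra hc
    push Not at hc
    have hxr : x ≤ r := by nlinarith [mul_pos hC1p hεp]
    have hsumle : ∑ p ∈ F, (r ^ len p - x ^ len p) ≤ 2 * ε := by
      rw [Finset.sum_sub_distrib]
      have := split x hsx
      linarith
    have h3 : r ^ len p0 - x ^ len p0 ≤ ∑ p ∈ F, (r ^ len p - x ^ len p) :=
      Finset.single_le_sum (f := fun p => r ^ len p - x ^ len p)
        (fun q _ => sub_nonneg.2 (pow_le_pow_left₀ hx.le hxr _)) hp0F
    have h4 : x ^ (len p0 - 1) * (r - x) ≤ r ^ len p0 - x ^ len p0 := by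
      obtain ⟨l, hl⟩ : ∃ l, len p0 = l + 1 := ⟨len p0 - 1, by omega⟩
      rw [hl, Nat.add_sub_cancel, pow_succ, pow_succ]
      have : x ^ l ≤ r ^ l := pow_le_pow_left₀ hx.le hxr _
      nlinarith [mul_le_mul_of_nonneg_right this hr]
    have h5 : x ^ (len p0 - 1) * (C1 * ε) < x ^ (len p0 - 1) * (r - x) := by
      refine mul_lt_mul_of_pos_left ?_ (by positivity); linarith
    have h6 : x ^ (len p0 - 1) * (C1 * ε) = 2 * ε := by
      rw [hC1]; field_simp
    linarith
  have hse2 : s ≤ e + C2 * ε := by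
    set R := x + C1 * ε with hR
    have hR0 : 0 < R := by positivity
    have hv' : (0 : ℝ) < v := by exact_mod_cast hv
    have h3 : s ^ v ≤ (R ^ (a / b)) ^ v := by
      calc s ^ v ≤ r ^ u := c3
        _ ≤ R ^ u := by gcongr
        _ = R ^ (u : ℝ) := (Real.rpow_natCast _ _).symm
        _ ≤ R ^ ((a / b) * v) := by
          refine Real.rpow_le_rpow_of_exponent_ge hR0 e1.le ?_
          rw [div_mul_eq_mul_div, div_le_iff₀ hb]; linarith
        _ = _ := by rw [Real.rpow_mul hR0.le, Real.rpow_natCast]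
    have h4 : s ≤ R ^ (a / b) := le_of_pow_le_pow_left₀ hv.ne' (by positivity) h3
    have h5 : R = x * (1 + C1 * ε / x) := by rw [hR]; field_simp
    have h6 : (1 + C1 * ε / x) ^ (a / b) ≤ 1 + (a / b) * (C1 * ε / x) := by
      refine rpow_one_add_le_one_add_mul_self ?_ (by positivity) ?_
      · have : 0 ≤ C1 * ε / x := by positivity
        linarith
      · rw [div_le_one hb]; exact hab.le
    calc s ≤ R ^ (a / b) := h4
      _ = e * (1 + C1 * ε / x) ^ (a / b) := by
        rw [h5, Real.mul_rpow hx.le (by positivity), hrel]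
      _ ≤ e * (1 + (a / b) * (C1 * ε / x)) := by gcongr
      _ = e + C2 * ε := by rw [hC2]; ring
  have htail : ∑' p : {p // p ∉ F}, e ^ len (p : ι) ≤ C3 * ε := by
    set S := e + C2 * ε with hS
    have hSe : e ≤ S := by have : 0 < C2 * ε := by positivity
                           linarith
    have h3 : ∑ p ∈ F, s ^ len p ≤ ∑ p ∈ F, e ^ len p + C3 * ε := by
      calc ∑ p ∈ F, s ^ len p ≤ ∑ p ∈ F, S ^ len p := by gcongr
        _ ≤ ∑ p ∈ F, (e ^ len p + (S - e) / (1 / 2 - e) * (1 / 2) ^ len p) :=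
          Finset.sum_le_sum fun q _ => pow_convex_bound he0.le hSe e2.le he _
        _ = ∑ p ∈ F, e ^ len p + (S - e) / (1 / 2 - e) * ∑ p ∈ F, (1 / 2) ^ len p := by
          rw [Finset.sum_add_distrib, Finset.mul_sum]
        _ ≤ ∑ p ∈ F, e ^ len p + (S - e) / (1 / 2 - e) * W := by
          have : ∑ p ∈ F, (1 / 2 : ℝ) ^ len p ≤ W := hs.sum_le_tsum F fun _ _ => by positivity
          have h0 : 0 ≤ (S - e) / (1 / 2 - e) := div_nonneg (by linarith) hd.le
          gcongr
        _ = _ := by rw [hC3, hS]; ring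
    have := split e hse
    linarith
  by_contra hc
  push Not at hc
  have h7 := (single e he0.le hse p hp).trans htail
  have h8 : e ^ ((M + 1) * j + 1 + d) ≤ e ^ len p :=
    pow_le_pow_of_le_one he0.le (by linarith) hc
  linarith

theorem completeness (hs : Summable fun p => (1 / 2 : ℝ) ^ len p) (p0 : ι) (hp0 : 1 ≤ len p0)
    {x e a b : ℝ} (hx : 0 < x) (hxe : x < e) (he : e < 1 / 2) (ha : 0 < a) (hab : a < b)
    (hrel : x ^ (a / b) = e) {ε : ℝ} (hε : 0 < ε) :
    ∃ P P' Q u v : ℕ, 0 < Q ∧ 0 < v ∧ P' ^ v * Q ^ u ≤ P ^ u * Q ^ v ∧ a * v < b * u ∧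
      (∑' p, ((P : ℝ) / Q) ^ len p) < (∑' p, x ^ len p) + ε ∧
      (∑' p, e ^ len p) < (∑' p, ((P' : ℝ) / Q) ^ len p) ∧ (P : ℝ) / Q ≤ 1 / 2 ∧
      (P' : ℝ) / Q ≤ 1 / 2 := by
  have hb : 0 < b := ha.trans hab
  have he0 : 0 < e := hx.trans hxe
  have hx2 : x < 1 / 2 := hxe.trans he
  have hd : 0 < 1 / 2 - x := by linarith
  set W := ∑' p, (1 / 2 : ℝ) ^ len p with hW
  have hW0 : 0 ≤ W := tsum_nonneg fun p => by positivity
  have hsx := summable_of_le_half hs hx.le hx2.le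
  have hse := summable_of_le_half hs he0.le he.le
  set δ : ℝ := ε * (1 / 2 - x) / (W + 1) with hδ
  have hδ0 : 0 < δ := by positivity
  obtain ⟨r, hr1, hr2⟩ := exists_rat_btwn (show x < min (1 / 2) (x + δ) from
    lt_min hx2 (by linarith))
  have hr3 : (r : ℝ) < 1 / 2 := hr2.trans_le (min_le_left _ _)
  have hr4 : (r : ℝ) < x + δ := hr2.trans_le (min_le_right _ _)
  have hr0 : (0 : ℝ) < r := hx.trans hr1
  have hZr : (∑' p, (r : ℝ) ^ len p) < (∑' p, x ^ len p) + ε := by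
    have hsr := summable_of_le_half hs hr0.le hr3.le
    calc (∑' p, (r : ℝ) ^ len p)
        ≤ ∑' p, (x ^ len p + (r - x) / (1 / 2 - x) * (1 / 2) ^ len p) :=
          hsr.tsum_le_tsum (fun p => pow_convex_bound hx.le hr1.le hr3.le hx2 _)
            (hsx.add (hs.mul_left _))
      _ = (∑' p, x ^ len p) + (r - x) / (1 / 2 - x) * W := by
          rw [hsx.tsum_add (hs.mul_left _), tsum_mul_left]
      _ < _ := by
          have h1 : (r - x) / (1 / 2 - x) ≤ ε / (W + 1) := by
            rw [div_le_div_iff₀ hd (by positivity)]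
            have : δ * (W + 1) = ε * (1 / 2 - x) := by rw [hδ]; field_simp
            nlinarith
          have h2 : ε / (W + 1) * W < ε := by
            rw [div_mul_eq_mul_div, div_lt_iff₀ (by positivity)]; nlinarith
          have h3 : (r - x) / (1 / 2 - x) * W ≤ ε / (W + 1) * W := by gcongr
          linarith
  have hg : e < (r : ℝ) ^ (a / b) := by
    rw [← hrel]; exact Real.rpow_lt_rpow hx.le hr1 (by positivity)
  obtain ⟨s, hs1, hs2⟩ := exists_rat_btwn (show e < min (1 / 2) ((r : ℝ) ^ (a / b)) from
    lt_min he hg)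
  have hs3 : (s : ℝ) < 1 / 2 := hs2.trans_le (min_le_left _ _)
  have hs4 : (s : ℝ) < (r : ℝ) ^ (a / b) := hs2.trans_le (min_le_right _ _)
  have hs0 : (0 : ℝ) < s := he0.trans hs1
  have hZs : (∑' p, e ^ len p) < ∑' p, (s : ℝ) ^ len p :=
    Summable.tsum_lt_tsum (i := p0) (fun p => pow_le_pow_left₀ he0.le hs1.le _)
      (pow_lt_pow_left₀ hs1 he0.le (by omega)) hse (summable_of_le_half hs hs0.le hs3.le)
  have hlr : Real.log r < 0 := Real.log_neg hr0 (by linarith)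
  have hlog : a / b < Real.log s / Real.log r := by
    rw [lt_div_iff_of_neg hlr, ← Real.log_rpow hr0]
    exact Real.log_lt_log hs0 hs4
  obtain ⟨g, hg1, hg2⟩ := exists_rat_btwn hlog
  have hg0 : (0 : ℝ) < g := lt_trans (by positivity) hg1
  have hcast : ∀ q : ℚ, (0 : ℝ) < q → (q : ℝ) = (q.num.toNat : ℝ) / q.den := by
    intro q hq
    have hq' : 0 < q := by exact_mod_cast hq
    have h1 : ((q.num.toNat : ℕ) : ℝ) = (q.num : ℝ) := by
      exact_mod_cast Int.toNat_of_nonneg (Rat.num_pos.2 hq').le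
    rw [h1]; exact_mod_cast (Rat.num_div_den q).symm
  have hgc := hcast g hg0
  have hrd : (0 : ℝ) < r.den := by exact_mod_cast r.pos
  have hsd : (0 : ℝ) < s.den := by exact_mod_cast s.pos
  have hgd : (0 : ℝ) < g.den := by exact_mod_cast g.pos
  have hQr : (((r.num.toNat * s.den : ℕ) : ℝ)) / ((r.den * s.den : ℕ) : ℝ) = r := by
    rw [hcast r hr0]; push_cast; field_simp
  have hQs : (((s.num.toNat * r.den : ℕ) : ℝ)) / ((r.den * s.den : ℕ) : ℝ) = s := by
    rw [hcast s hs0]; push_cast; field_simp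
  refine ⟨r.num.toNat * s.den, s.num.toNat * r.den, r.den * s.den, g.num.toNat, g.den,
    Nat.mul_pos r.pos s.pos, g.pos, ?_, ?_, ?_, ?_, ?_, ?_⟩
  · have hpow : (s : ℝ) ^ g.den ≤ (r : ℝ) ^ g.num.toNat := by
      rw [← Real.log_le_log_iff (by positivity) (by positivity), Real.log_pow, Real.log_pow]
      rw [lt_div_iff_of_neg hlr, hgc, div_mul_eq_mul_div, lt_div_iff₀ hgd] at hg2
      linarith
    rw [← hQr, ← hQs, div_pow, div_pow, div_le_div_iff₀] at hpow
    · exact_mod_cast hpow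
    · have : (0 : ℝ) < ((r.den * s.den : ℕ) : ℝ) := by push_cast; positivity
      positivity
    · have : (0 : ℝ) < ((r.den * s.den : ℕ) : ℝ) := by push_cast; positivity
      positivity
  · rw [hgc, div_lt_div_iff₀ hb hgd] at hg1
    linarith
  · rw [hQr]; exact hZr
  · rw [hQs]; exact hZs
  · rw [hQr]; exact hr3.le
  · rw [hQs]; exact hs3.le

end Analysis
section Kraft

theorem prefixFree_uniquelyDecodable {S : Set (List Bool)}
    (h : ∀ p ∈ S, ∀ q ∈ S, p <+: q → p = q) (hnil : [] ∉ S) :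
    InformationTheory.UniquelyDecodable S := by
  intro L₁
  induction L₁ with
  | nil =>
    intro L₂ _ h2 he
    cases L₂ with
    | nil => rfl
    | cons a L =>
      exfalso
      have ha : a ∈ S := h2 a (by simp)
      simp only [List.flatten_nil, List.flatten_cons] at he
      have : a = [] := (List.append_eq_nil_iff.1 he.symm).1
      exact hnil (this ▸ ha)
  | cons a L ih =>
    intro L₂ h1 h2 he
    have ha : a ∈ S := h1 a (by simp)
    cases L₂ with
    | nil =>
      exfalso
      simp only [List.flatten_nil, List.flatten_cons] at he
      have : a = [] := (List.append_eq_nil_iff.1 he).1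
      exact hnil (this ▸ ha)
    | cons b L' =>
      have hb : b ∈ S := h2 b (by simp)
      simp only [List.flatten_cons] at he
      have hab : a = b := by
        rcases List.prefix_or_prefix_of_prefix (l₁ := a) (l₂ := b) (l₃ := a ++ L.flatten)
          (List.prefix_append _ _) (he ▸ List.prefix_append _ _) with hp | hp
        · exact h a ha b hb hp
        · exact (h b hb a ha hp).symm
      subst hab
      rw [ih L' (fun w hw => h1 w (by simp [hw])) (fun w hw => h2 w (by simp [hw]))
        (List.append_cancel_left he)]

theorem kraft_finite {S : Finset (List Bool)}
    (h : ∀ p ∈ S, ∀ q ∈ S, p <+: q → p = q) :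
    ∑ p ∈ S, (1 / 2 : ℝ) ^ p.length ≤ 1 := by
  by_cases hnil : [] ∈ S
  · have : S = {[]} := by
      ext q
      simp only [Finset.mem_singleton]
      refine ⟨fun hq => (h [] hnil q hq List.nil_prefix).symm, fun hq => hq ▸ hnil⟩
    rw [this]; simp
  · have := InformationTheory.kraft_mcmillan_inequality (S := S)
      (prefixFree_uniquelyDecodable (S := (S : Set (List Bool))) (by simpa using h) (by simpa using hnil))
    simpa using this

theorem kraft_dom {U : List Bool →. List Bool} (hU : PrefixFree U)
    (F : Finset {p : List Bool // (U p).Dom}) :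
    ∑ p ∈ F, (1 / 2 : ℝ) ^ (p : List Bool).length ≤ 1 := by
  have := kraft_finite (S := F.map (Function.Embedding.subtype _)) (by
    intro p hp q hq hpq
    simp only [Finset.mem_map, Function.Embedding.subtype_apply, Subtype.exists] at hp hq
    obtain ⟨p', hp', _, rfl⟩ := hp
    obtain ⟨q', hq', _, rfl⟩ := hq
    exact hU _ _ hp' hq' hpq)
  simpa using this

end Kraft

section Machines

open Nat.Partrec (Code)
open Encodable

/-- Length of the string with code `i`. -/
def lenOf (i : ℕ) : ℕ := ((decode (α := List Bool) i).getD []).length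

theorem primrec_lenOf : Primrec lenOf :=
  Primrec.list_length.comp (Primrec.option_getD.comp Primrec.decode (Primrec.const []))

/-- The scaled partial sum at stage `k`. -/
def stageSum (c : Code) (k P Q : ℕ) : ℕ :=
  ∑ i ∈ Finset.range k, if (Code.evaln k c i).isSome then P ^ lenOf i * Q ^ (k - lenOf i) else 0

theorem primrec_pow : Primrec₂ ((· ^ ·) : ℕ → ℕ → ℕ) :=
  Primrec₂.unpaired'.1 Nat.Primrec.pow

theorem primrec_stageSum (c : Code) :
    Primrec (fun t : ℕ × ℕ × ℕ => stageSum c t.1 t.2.1 t.2.2) := by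
  have hstep : Primrec₂ (fun (t : ℕ × ℕ × ℕ) (y : ℕ × ℕ) => y.2 +
      (if (Code.evaln t.1 c y.1).isSome = true
        then t.2.1 ^ lenOf y.1 * t.2.2 ^ (t.1 - lenOf y.1) else 0)) := by
    have hi : Primrec (fun z : (ℕ × ℕ × ℕ) × (ℕ × ℕ) => z.2.1) := Primrec.fst.comp Primrec.snd
    have hk : Primrec (fun z : (ℕ × ℕ × ℕ) × (ℕ × ℕ) => z.1.1) := Primrec.fst.comp Primrec.fst
    have hP : Primrec (fun z : (ℕ × ℕ × ℕ) × (ℕ × ℕ) => z.1.2.1) :=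
      Primrec.fst.comp (Primrec.snd.comp Primrec.fst)
    have hQ : Primrec (fun z : (ℕ × ℕ × ℕ) × (ℕ × ℕ) => z.1.2.2) :=
      Primrec.snd.comp (Primrec.snd.comp Primrec.fst)
    have hl := primrec_lenOf.comp hi
    refine Primrec.nat_add.comp (Primrec.snd.comp Primrec.snd) (Primrec.ite ?_ ?_ (Primrec.const 0))
    · exact Primrec.eq.comp (Primrec.option_isSome.comp
        (Nat.Partrec.Code.primrec_evaln.comp ((hk.pair (Primrec.const c)).pair hi)))
        (Primrec.const true)
    · exact Primrec.nat_mul.comp (primrec_pow.comp hP hl)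
        (primrec_pow.comp hQ (Primrec.nat_sub.comp hk hl))
  refine (Primrec.nat_rec' (Primrec.fst (α := ℕ) (β := ℕ × ℕ)) (Primrec.const 0) hstep).of_eq ?_
  rintro ⟨k, P, Q⟩
  simp only [stageSum]
  generalize hk : Finset.range k = R
  have : ∀ n, (Nat.rec 0 (fun i acc => acc + (if (Code.evaln k c i).isSome = true
        then P ^ lenOf i * Q ^ (k - lenOf i) else 0)) n : ℕ) =
      ∑ i ∈ Finset.range n, if (Code.evaln k c i).isSome then P ^ lenOf i * Q ^ (k - lenOf i) else 0 := by
    intro n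
    induction n with
    | zero => rfl
    | succ n ih => rw [Finset.sum_range_succ, ← ih]
  rw [← hk]
  exact this k

theorem search_machine {W : Type} [Primcodable W] {chk : List Bool → W → Bool}
    (hchk : Computable₂ chk) {out : W → List Bool} (hout : Computable out) :
    ∃ C : List Bool →. List Bool, Partrec C ∧
      (∀ p s, s ∈ C p → ∃ w, chk p w = true ∧ out w = s) ∧
      (∀ p, (∃ w, chk p w = true) → (C p).Dom) := by
  let f : List Bool → ℕ → Option (List Bool) := fun p t =>
    (decode (α := W) t).bind fun w => cond (chk p w) (some (out w)) none
  have hf : Computable₂ f := by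
    refine Computable.option_bind (Computable.decode.comp Computable.snd) ?_
    refine Computable.cond (hchk.comp (Computable.fst.comp Computable.fst) Computable.snd) ?_
      (Computable.const none)
    exact Computable.option_some.comp (hout.comp Computable.snd)
  refine ⟨fun p => Nat.rfindOpt (f p), Partrec.rfindOpt hf, fun p s hs => ?_, ?_⟩
  · obtain ⟨t, ht⟩ := Nat.rfindOpt_spec hs
    simp only [f, Option.mem_def, Option.bind_eq_some_iff] at ht
    obtain ⟨w, _, hw⟩ := ht
    refine ⟨w, ?_⟩
    cases hc : chk p w <;> simp [hc] at hw
    exact ⟨rfl, hw⟩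
  · rintro p ⟨w, hw⟩
    refine Nat.rfindOpt_dom.2 ⟨encode w, out w, ?_⟩
    simp [f, hw]

/-- Binary value of a string. -/
def binVal (p : List Bool) : ℕ := p.foldl (fun a b => 2 * a + b.toNat) 0

theorem primrec_binVal : Primrec binVal := by
  have : Primrec₂ (fun (_ : List Bool) (y : ℕ × Bool) => 2 * y.1 + y.2.toNat) :=
    Primrec.nat_add.comp (Primrec.nat_mul.comp (Primrec.const 2) (Primrec.fst.comp Primrec.snd))
      ((Primrec.dom_bool Bool.toNat).comp (Primrec.snd.comp Primrec.snd))
  exact Primrec.list_foldl Primrec.id (Primrec.const 0) this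

theorem exists_bits (m w : ℕ) (hw : w < 2 ^ m) : ∃ l : List Bool, l.length = m ∧
    ∀ a : ℕ, l.foldl (fun a b => 2 * a + b.toNat) a = a * 2 ^ m + w := by
  induction m generalizing w with
  | zero => exact ⟨[], rfl, fun a => by simp at hw; simp [hw]⟩
  | succ m ih =>
    obtain ⟨l, hl, h⟩ := ih (w / 2) (by rw [pow_succ] at hw; omega)
    refine ⟨l ++ [decide (w % 2 = 1)], by simp [hl], fun a => ?_⟩
    rw [List.foldl_append, h]
    have h2 : (decide (w % 2 = 1)).toNat = w % 2 := by
      rcases Nat.mod_two_eq_zero_or_one w with h | h <;> simp [h]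
    simp only [List.foldl_cons, List.foldl_nil, h2]
    have := Nat.div_add_mod w 2
    rw [pow_succ]
    nlinarith

theorem exists_input (M j w : ℕ) (hw : w < 2 ^ (M * j)) : ∃ p : List Bool,
    p.length = (M + 1) * j + 1 ∧ p.idxOf false = j ∧ binVal p % 2 ^ (M * j) = w := by
  obtain ⟨l, hl, h⟩ := exists_bits (M * j) w hw
  refine ⟨List.replicate j true ++ false :: l, ?_, ?_, ?_⟩
  · simp [hl]; ring
  · rw [List.idxOf_append_of_notMem (by simp [List.mem_replicate])]; simp
  · rw [binVal, List.foldl_append, List.foldl_cons, h, Nat.mul_add_mod_self_right, Nat.mod_eq_of_lt hw]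

theorem input_prefixFree {M : ℕ} {p q : List Bool}
    (hp : p.length = (M + 1) * p.idxOf false + 1) (hq : q.length = (M + 1) * q.idxOf false + 1)
    (h : p <+: q) : p = q := by
  refine h.eq_of_length ?_
  have hlt : p.idxOf false < p.length := by
    rw [hp]; nlinarith [Nat.zero_le (p.idxOf false)]
  have hmem : false ∈ p := List.idxOf_lt_length_iff.1 hlt
  obtain ⟨r, rfl⟩ := h
  rw [List.idxOf_append_of_mem hmem] at hq
  rw [hp, hq]

end Machines
section Stages

open Nat.Partrec (Code)
open Encodable Filter

theorem exists_stages {U : List Bool →. List Bool} (hU : Partrec U) :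
    ∃ (c : Code) (F : ℕ → Finset {p : List Bool // (U p).Dom}), Tendsto F atTop atTop ∧
      (∀ k P Q : ℕ, 0 < Q → (stageSum c k P Q : ℝ) =
        (Q : ℝ) ^ k * ∑ p ∈ F k, ((P : ℝ) / Q) ^ (p : List Bool).length) ∧
      (∀ k s, ∀ p : {p : List Bool // (U p).Dom}, p ∈ F k → s ∈ U p →
        ∃ i < k, Code.evaln k c i = some (encode s)) := by
  classical
  obtain ⟨c, hc⟩ := Code.exists_code.1 (Partrec.bind_decode₂_iff.1 hU)
  have heval : ∀ p : List Bool, c.eval (encode p) = (U p).map encode := by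
    intro p; rw [hc]; simp
  have hfin : ∀ k, {p : {p : List Bool // (U p).Dom} |
      (Code.evaln k c (encode (p : List Bool))).isSome}.Finite := by
    intro k
    refine Set.Finite.of_finite_image (f := fun p => encode (p : List Bool))
      ((Set.finite_lt_nat k).subset ?_) ?_
    · rintro _ ⟨p, hp, rfl⟩
      obtain ⟨y, hy⟩ := Option.isSome_iff_exists.1 hp
      exact Code.evaln_bound hy
    · exact fun p _ q _ h => Subtype.ext (encode_injective h)
  have hmem : ∀ k p, p ∈ (hfin k).toFinset ↔ (Code.evaln k c (encode (p : List Bool))).isSome := by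
    intro k p; simp
  refine ⟨c, fun k => (hfin k).toFinset, ?_, ?_, ?_⟩
  · refine tendsto_atTop_finset_of_monotone ?_ ?_
    · intro k l hkl p hp
      rw [hmem] at hp ⊢
      obtain ⟨y, hy⟩ := Option.isSome_iff_exists.1 hp
      exact Option.isSome_iff_exists.2 ⟨y, Code.evaln_mono hkl hy⟩
    · rintro ⟨p, hp⟩
      have : encode ((U p).get hp) ∈ c.eval (encode p) := by
        rw [heval]; exact Part.mem_map _ (Part.get_mem hp)
      obtain ⟨k, hk⟩ := Code.evaln_complete.1 this
      exact ⟨k, (hmem k _).2 (Option.isSome_iff_exists.2 ⟨_, hk⟩)⟩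
  · intro k P Q hQ
    have hQ' : (Q : ℝ) ≠ 0 := by positivity
    rw [stageSum, ← Finset.sum_filter, Nat.cast_sum, Finset.mul_sum]
    symm
    refine Finset.sum_bij (fun p _ => encode (p : List Bool)) ?_ ?_ ?_ ?_
    · intro p hp
      rw [hmem] at hp
      obtain ⟨y, hy⟩ := Option.isSome_iff_exists.1 hp
      simp [hp, Code.evaln_bound hy]
    · intro p _ q _ h
      exact Subtype.ext (encode_injective h)
    · intro i hi
      obtain ⟨hik, hi⟩ := Finset.mem_filter.1 hi
      obtain ⟨y, hy⟩ := Option.isSome_iff_exists.1 hi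
      have h1 := Code.evaln_sound hy
      rw [hc] at h1
      obtain ⟨p, hp, hp2⟩ := Part.mem_bind_iff.1 h1
      obtain ⟨s, hs, _⟩ := (Part.mem_map_iff _).1 hp2
      have hpi : encode p = i := mem_decode₂.1 (Part.mem_coe.1 hp)
      exact ⟨⟨p, Part.dom_iff_mem.2 ⟨s, hs⟩⟩, (hmem _ _).2 (by simpa [hpi] using hi), hpi⟩
    · intro p hp
      rw [hmem] at hp
      obtain ⟨y, hy⟩ := Option.isSome_iff_exists.1 hp
      have hlt := Code.evaln_bound hy
      have hle : (p : List Bool).length ≤ k := (length_le_encode _).trans hlt.le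
      have hlen : lenOf (encode (p : List Bool)) = (p : List Bool).length := by simp [lenOf]
      rw [hlen]
      push_cast
      rw [div_pow, ← Nat.sub_add_cancel hle, pow_add, Nat.sub_add_cancel hle]
      field_simp
  · intro k s p hp hs
    rw [hmem] at hp
    obtain ⟨y, hy⟩ := Option.isSome_iff_exists.1 hp
    refine ⟨_, Code.evaln_bound hy, ?_⟩
    have h1 := Code.evaln_sound hy
    rw [heval] at h1
    have h2 : encode s ∈ (U p).map encode := Part.mem_map _ hs
    rw [hy, Part.mem_unique h1 h2]

/-- Clause data: input and witness `(s, k, P, R, Q, u, v, N)`. -/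
abbrev Wit : Type := List Bool × ℕ × ℕ × ℕ × ℕ × ℕ × ℕ × ℕ

theorem computable_add {α : Type*} [Primcodable α] {f g : α → ℕ} (hf : Computable f)
    (hg : Computable g) : Computable fun x => f x + g x := Primrec.nat_add.to_comp.comp hf hg

theorem computable_mul {α : Type*} [Primcodable α] {f g : α → ℕ} (hf : Computable f)
    (hg : Computable g) : Computable fun x => f x * g x := Primrec.nat_mul.to_comp.comp hf hg

theorem computable_pow {α : Type*} [Primcodable α] {f g : α → ℕ} (hf : Computable f)
    (hg : Computable g) : Computable fun x => f x ^ g x := primrec_pow.to_comp.comp hf hg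

theorem computable_le {α : Type*} [Primcodable α] {f g : α → ℕ} (hf : Computable f)
    (hg : Computable g) : Computable fun x => decide (f x ≤ g x) :=
  (PrimrecRel.decide Primrec.nat_le).to_comp.comp hf hg

theorem computable_and {α : Type*} [Primcodable α] {f g : α → Bool} (hf : Computable f)
    (hg : Computable g) : Computable fun x => f x && g x := Primrec.and.to_comp.comp hf hg

theorem computable_stage {α : Type*} [Primcodable α] (c : Code) {f g h : α → ℕ} (hf : Computable f)
    (hg : Computable g) (hh : Computable h) : Computable fun x => stageSum c (f x) (g x) (h x) :=
  (primrec_stageSum c).to_comp.comp (hf.pair (hg.pair hh))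

theorem computable_fresh (c : Code) : Computable fun y : List Bool × ℕ =>
    decide (∀ i ∈ List.range y.2, ¬ Code.evaln y.2 c i = some (encode y.1)) := by
  have hR : PrimrecRel fun (i : ℕ) (y : List Bool × ℕ) =>
      ¬ Code.evaln y.2 c i = some (encode y.1) := by
    refine PrimrecPred.not (Primrec.eq.comp ?_ ?_)
    · exact Nat.Partrec.Code.primrec_evaln.comp
        (((Primrec.snd.comp Primrec.snd).pair (Primrec.const c)).pair Primrec.fst)
    · exact Primrec.option_some.comp (Primrec.encode.comp (Primrec.fst.comp Primrec.snd))
  have h2 : PrimrecPred fun y : List Bool × ℕ =>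
      ∀ i ∈ List.range y.2, ¬ Code.evaln y.2 c i = some (encode y.1) :=
    hR.forall_mem_list.comp (Primrec.list_range.comp Primrec.snd) Primrec.id
  exact h2.decide.to_comp

/-- The decidable test performed by the machine. -/
def chk (c : Code) (K M : ℕ) (ga gb gx gy : ℕ → ℕ) (p : List Bool) (z : Wit) : Bool :=
  let j := p.idxOf false
  let s := z.1
  let k := z.2.1
  let P := z.2.2.1
  let P' := z.2.2.2.1
  let Q := z.2.2.2.2.1
  let u := z.2.2.2.2.2.1
  let v := z.2.2.2.2.2.2.1
  let N := z.2.2.2.2.2.2.2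
  (decide (p.length ≤ (M + 1) * j + 1) && decide ((M + 1) * j + 1 ≤ p.length)) &&
  ((decide (1 ≤ Q) && decide (1 ≤ v)) &&
  (decide ((binVal p % 2 ^ (M * j)) * 2 ^ k + 1 ≤ stageSum c k 1 2 * 2 ^ (M * j)) &&
  (decide (stageSum c k P Q * 2 ^ (K * j) * (N + 1) + 2 * (Q ^ k * 2 ^ (K * j)) ≤
    gx N * (Q ^ k * 2 ^ (K * j)) + Q ^ k * (N + 1)) &&
  (decide (P' ^ v * Q ^ u ≤ P ^ u * Q ^ v) &&
  (decide ((ga N + 2) * v + 2 * u ≤ gb N * u) &&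
  (decide ((gy N + 2) * Q ^ k ≤ stageSum c k P' Q * (N + 1)) &&
  decide (∀ i ∈ List.range k, ¬ Code.evaln k c i = some (encode s))))))))

theorem computable_chk (c : Code) (K M : ℕ) {ga gb gx gy : ℕ → ℕ} (ha : Computable ga)
    (hb : Computable gb) (hx : Computable gx) (hy : Computable gy) :
    Computable₂ (chk c K M ga gb gx gy) := by
  have cst : ∀ n : ℕ, Computable fun _ : List Bool × Wit => n := fun n => Computable.const n
  have hp : Computable fun y : List Bool × Wit => y.1 := Computable.fst
  have hj : Computable fun y : List Bool × Wit => y.1.idxOf false :=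
    Primrec.list_idxOf.to_comp.comp (Computable.const false) Computable.fst
  have hl : Computable fun y : List Bool × Wit => y.1.length := Computable.list_length.comp hp
  have hbv : Computable fun y : List Bool × Wit => binVal y.1 := primrec_binVal.to_comp.comp hp
  have hz : Computable fun y : List Bool × Wit => y.2 := Computable.snd
  have hs := Computable.fst.comp hz
  have hz1 := Computable.snd.comp hz
  have hk := Computable.fst.comp hz1
  have hz2 := Computable.snd.comp hz1
  have hP := Computable.fst.comp hz2
  have hz3 := Computable.snd.comp hz2
  have hP' := Computable.fst.comp hz3
  have hz4 := Computable.snd.comp hz3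
  have hQ := Computable.fst.comp hz4
  have hz5 := Computable.snd.comp hz4
  have hu := Computable.fst.comp hz5
  have hz6 := Computable.snd.comp hz5
  have hv := Computable.fst.comp hz6
  have hN := Computable.snd.comp hz6
  have hN1 := computable_add hN (cst 1)
  have hMj := computable_pow (cst 2) (computable_mul (cst M) hj)
  have hKj := computable_pow (cst 2) (computable_mul (cst K) hj)
  have hQk := computable_pow hQ hk
  have hlen := computable_add (computable_mul (cst (M + 1)) hj) (cst 1)
  have c1 := computable_and (computable_le hl hlen) (computable_le hlen hl)
  have c2 := computable_and (computable_le (cst 1) hQ) (computable_le (cst 1) hv)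
  have c3 := computable_le (computable_add (computable_mul (Primrec.nat_mod.to_comp.comp hbv hMj)
    (computable_pow (cst 2) hk)) (cst 1))
    (computable_mul (computable_stage c hk (cst 1) (cst 2)) hMj)
  have c4 := computable_le (computable_add (computable_mul (computable_mul
    (computable_stage c hk hP hQ) hKj) hN1) (computable_mul (cst 2) (computable_mul hQk hKj)))
    (computable_add (computable_mul (hx.comp hN) (computable_mul hQk hKj)) (computable_mul hQk hN1))
  have c5 := computable_le (computable_mul (computable_pow hP' hv) (computable_pow hQ hu))
    (computable_mul (computable_pow hP hu) (computable_pow hQ hv))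
  have c6 := computable_le (computable_add (computable_mul (computable_add (ha.comp hN) (cst 2)) hv)
    (computable_mul (cst 2) hu)) (computable_mul (hb.comp hN) hu)
  have c7 := computable_le (computable_mul (computable_add (hy.comp hN) (cst 2)) hQk)
    (computable_mul (computable_stage c hk hP' hQ) hN1)
  have c8 := (computable_fresh c).comp (hs.pair hk)
  exact computable_and c1 (computable_and c2 (computable_and c3 (computable_and c4
    (computable_and c5 (computable_and c6 (computable_and c7 c8))))))

theorem chk_iff (c : Code) (K M : ℕ) (ga gb gx gy : ℕ → ℕ) (p s : List Bool)
    (k P P' Q u v N : ℕ) :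
    chk c K M ga gb gx gy p (s, k, P, P', Q, u, v, N) = true ↔
      p.length = (M + 1) * p.idxOf false + 1 ∧ 0 < Q ∧ 0 < v ∧
      (binVal p % 2 ^ (M * p.idxOf false)) * 2 ^ k < stageSum c k 1 2 * 2 ^ (M * p.idxOf false) ∧
      stageSum c k P Q * 2 ^ (K * p.idxOf false) * (N + 1) + 2 * (Q ^ k * 2 ^ (K * p.idxOf false)) ≤
        gx N * (Q ^ k * 2 ^ (K * p.idxOf false)) + Q ^ k * (N + 1) ∧
      P' ^ v * Q ^ u ≤ P ^ u * Q ^ v ∧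
      (ga N + 2) * v + 2 * u ≤ gb N * u ∧
      (gy N + 2) * Q ^ k ≤ stageSum c k P' Q * (N + 1) ∧
      ∀ i < k, ¬ Code.evaln k c i = some (encode s) := by
  simp only [chk, Bool.and_eq_true, decide_eq_true_eq, List.mem_range, Nat.succ_le_iff, and_assoc,
    le_antisymm_iff (α := ℕ)]

end Stages
section Core

open Nat.Partrec (Code)
open Encodable Filter Topology

theorem exists_nonempty_program {U : List Bool →. List Bool} (hU : OptimalMachine U) :
    ∃ p0 : {p : List Bool // (U p).Dom}, 1 ≤ (p0 : List Bool).length := by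
  have hch : Computable₂ (fun (p w : List Bool) => (decide (p.length = 1) && decide (w = p))) := by
    refine computable_and ?_ ?_
    · exact (PrimrecRel.decide Primrec.eq).to_comp.comp
        (Computable.list_length.comp Computable.fst) (Computable.const 1)
    · exact (PrimrecRel.decide Primrec.eq).to_comp.comp Computable.snd Computable.fst
  obtain ⟨C, hC, hC1, hC2⟩ := search_machine hch Computable.id
  have hspec : ∀ p s, s ∈ C p → p.length = 1 ∧ s = p := by
    intro p s hs
    obtain ⟨w, hw, rfl⟩ := hC1 p s hs
    simpa using hw
  have hdom : ∀ p : List Bool, p.length = 1 → p ∈ C p := by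
    intro p hp
    have h1 : (C p).Dom := hC2 p ⟨p, by simp [hp]⟩
    have h2 := Part.get_mem h1
    rwa [(hspec _ _ h2).2] at h2
  have hpf : PrefixFree C := by
    intro p q hp hq hpq
    refine hpq.eq_of_length ?_
    rw [(hspec _ _ (Part.get_mem hp)).1, (hspec _ _ (Part.get_mem hq)).1]
  obtain ⟨d, hd⟩ := hU.2.2 C hC hpf
  obtain ⟨p, hp, _⟩ := hd _ _ (hdom [true] rfl)
  obtain ⟨q, hq, _⟩ := hd _ _ (hdom [false] rfl)
  by_cases hp0 : p = []
  · by_cases hq0 : q = []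
    · subst hp0; subst hq0
      have := Part.mem_unique hp hq
      simp at this
    · exact ⟨⟨q, Part.dom_iff_mem.2 ⟨_, hq⟩⟩, List.length_pos_iff.2 hq0⟩
  · exact ⟨⟨p, Part.dom_iff_mem.2 ⟨_, hp⟩⟩, List.length_pos_iff.2 hp0⟩

theorem eventually_linear {A B : ℝ} (h : A < B) (C : ℝ) :
    ∀ᶠ N : ℕ in atTop, A * (N + 1) + C ≤ B * (N + 1) := by
  have h1 : Tendsto (fun N : ℕ => (B - A) * ((N : ℝ) + 1)) atTop atTop :=
    (tendsto_atTop_add_const_right _ _ tendsto_natCast_atTop_atTop).const_mul_atTop (sub_pos.2 h)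
  filter_upwards [h1.eventually_ge_atTop C] with N hN
  linarith

theorem Zfun_eq (U : List Bool →. List Bool) (t : ℝ) :
    Zfun U t = ∑' p : {p : List Bool // (U p).Dom},
      ((2 : ℝ) ^ (-1 / t)) ^ (p : List Bool).length := by
  unfold Zfun
  refine tsum_congr fun p => ?_
  rw [← Real.rpow_natCast, ← Real.rpow_mul (by norm_num)]
  congr 1
  ring

set_option maxHeartbeats 4000000 in
theorem core {U : List Bool →. List Bool} (hU : OptimalMachine U) {a b T : ℝ}
    (ha : ComputableReal a) (hb : ComputableReal b) (ha0 : 0 < a) (hab : a < b) (hb1 : b ≤ 1)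
    (hT0 : 0 < T) (hT1 : T < 1) (hZa : ComputableReal (Zfun U (a * T)))
    (hZb : ComputableReal (Zfun U (b * T))) : False := by
  have hb0 : 0 < b := ha0.trans hab
  obtain ⟨p0, hp0⟩ := exists_nonempty_program hU
  have hpf := hU.2.1
  have hsum : Summable fun p : {p : List Bool // (U p).Dom} =>
      (1 / 2 : ℝ) ^ (p : List Bool).length :=
    summable_of_sum_le (fun p => by positivity) (kraft_dom hpf)
  have hW1 : ∑' p : {p : List Bool // (U p).Dom}, (1 / 2 : ℝ) ^ (p : List Bool).length ≤ 1 :=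
    hsum.tsum_le_of_sum_le (kraft_dom hpf)
  have hW0 : 0 < ∑' p : {p : List Bool // (U p).Dom}, (1 / 2 : ℝ) ^ (p : List Bool).length :=
    hsum.tsum_pos (fun p => by positivity) p0 (by positivity)
  rw [Zfun_eq] at hZa hZb
  set x : ℝ := (2 : ℝ) ^ (-1 / (a * T)) with hx
  set e : ℝ := (2 : ℝ) ^ (-1 / (b * T)) with he
  have haT : 0 < a * T := by positivity
  have hbT : 0 < b * T := by positivity
  have habT : a * T < b * T := by nlinarith
  have hx0 : 0 < x := by positivity
  have hxe : x < e := by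
    refine Real.rpow_lt_rpow_of_exponent_lt (by norm_num) ?_
    rw [neg_div, neg_div, neg_lt_neg_iff]
    exact one_div_lt_one_div_of_lt haT habT
  have he2 : e < 1 / 2 := by
    have : (1 / 2 : ℝ) = 2 ^ (-1 : ℝ) := by rw [Real.rpow_neg_one]; norm_num
    rw [this]
    refine Real.rpow_lt_rpow_of_exponent_lt (by norm_num) ?_
    rw [neg_div, neg_lt_neg_iff, one_lt_div hbT]
    nlinarith
  have hrel : x ^ (a / b) = e := by
    rw [hx, ← Real.rpow_mul (by norm_num), he]
    congr 1
    field_simp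
  -- constants
  obtain ⟨K, M, hK, hM, h1, h2⟩ : ∃ K M : ℕ, 1 ≤ K ∧ 1 ≤ M ∧ x ^ M ≤ (1 / 2) ^ K ∧
      (1 / 2 : ℝ) ^ K < e ^ (M + 1) := by
    obtain ⟨K, hK⟩ := exists_nat_gt (2 / (b * T - a * T))
    have hd : 0 < b * T - a * T := by linarith
    rw [div_lt_iff₀ hd] at hK
    have hK1 : 0 < K := by
      rcases Nat.eq_zero_or_pos K with h | h
      · subst h; norm_num at hK
      · exact h
    have hKr : (0 : ℝ) < K := by exact_mod_cast hK1
    have hhalf : (1 / 2 : ℝ) ^ K = 2 ^ (-(K : ℝ)) := by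
      rw [Real.rpow_neg (by norm_num), Real.rpow_natCast]; simp
    have hpw : ∀ (t : ℝ) (n : ℕ), ((2 : ℝ) ^ (-1 / t)) ^ n = 2 ^ (-1 / t * n) := fun t n => by
      rw [Real.rpow_mul (by norm_num), Real.rpow_natCast]
    refine ⟨K, ⌈a * T * K⌉₊, hK1, Nat.ceil_pos.2 (by positivity), ?_, ?_⟩
    · rw [hhalf, hx, hpw]
      refine Real.rpow_le_rpow_of_exponent_le (by norm_num) ?_
      have := Nat.le_ceil (a * T * K)
      rw [neg_div, neg_mul, neg_le_neg_iff, one_div_mul_eq_div, le_div_iff₀ haT]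
      linarith
    · rw [hhalf, he, hpw]
      refine Real.rpow_lt_rpow_of_exponent_lt (by norm_num) ?_
      have := Nat.ceil_lt_add_one (show 0 ≤ a * T * K by positivity)
      rw [neg_div, neg_mul, neg_lt_neg_iff, one_div_mul_eq_div, div_lt_iff₀ hbT]
      push_cast
      nlinarith
  obtain ⟨ga, hga, hga'⟩ := ha.exists_approx ha0.le
  obtain ⟨gb, hgb, hgb'⟩ := hb.exists_approx hb0.le
  obtain ⟨gx, hgx, hgx'⟩ := hZa.exists_approx (tsum_nonneg fun p => by positivity)
  obtain ⟨gy, hgy, hgy'⟩ := hZb.exists_approx (tsum_nonneg fun p => by positivity)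
  obtain ⟨c, F, hF, hFs, hFo⟩ := exists_stages hU.1
  obtain ⟨C, hC, hC1, hC2⟩ := search_machine (computable_chk c K M hga hgb hgx hgy)
    (Computable.fst (α := List Bool))
  have hCpf : PrefixFree C := by
    intro p q hp hq hpq
    obtain ⟨⟨s, k, P, P', Q, u, v, N⟩, hw, _⟩ := hC1 p _ (Part.get_mem hp)
    obtain ⟨⟨s', k', P2, P2', Q', u', v', N'⟩, hw', _⟩ := hC1 q _ (Part.get_mem hq)
    exact input_prefixFree ((chk_iff ..).1 hw).1 ((chk_iff ..).1 hw').1 hpq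
  obtain ⟨d, hd⟩ := hU.2.2 C hC hCpf
  obtain ⟨j, hj⟩ := soundness hsum p0 hp0 hx0 hxe he2 ha0 hab hrel hK hM h1 h2 d
  specialize hj j le_rfl
  set W := ∑' p : {p : List Bool // (U p).Dom}, (1 / 2 : ℝ) ^ (p : List Bool).length with hW
  set Zx := ∑' p : {p : List Bool // (U p).Dom}, x ^ (p : List Bool).length with hZx
  set Zy := ∑' p : {p : List Bool // (U p).Dom}, e ^ (p : List Bool).length with hZy
  have h2m : (0 : ℝ) < 2 ^ (M * j) := by positivity
  -- the advice
  obtain ⟨w, hw1, hw2⟩ : ∃ w : ℕ, (w : ℝ) < W * 2 ^ (M * j) ∧ W * 2 ^ (M * j) ≤ w + 1 := by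
    have hpos : 0 < ⌈W * 2 ^ (M * j)⌉₊ := Nat.ceil_pos.2 (by positivity)
    refine ⟨⌈W * 2 ^ (M * j)⌉₊ - 1, ?_, ?_⟩
    · rw [← Nat.lt_ceil]; omega
    · have := Nat.le_ceil (W * 2 ^ (M * j))
      rw [Nat.cast_sub hpos]; simpa using this
  have hwlt : w < 2 ^ (M * j) := by
    have : (w : ℝ) < 2 ^ (M * j) := hw1.trans_le (by nlinarith)
    exact_mod_cast this
  obtain ⟨p, hplen, hpj, hpw⟩ := exists_input M j w hwlt
  have hε : (0 : ℝ) < (1 / 2) ^ (K * j) := by positivity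
  have h2n : (0 : ℝ) < 2 ^ (K * j) := by positivity
  have hε2 : (1 / 2 : ℝ) ^ (K * j) * 2 ^ (K * j) = 1 := by
    rw [← mul_pow]; norm_num
  have hδ2 : (1 / 2 : ℝ) ^ (M * j) * 2 ^ (M * j) = 1 := by
    rw [← mul_pow]; norm_num
  have hdom : (C p).Dom := by
    refine hC2 p ?_
    obtain ⟨P, P', Q, u, v, hQ, hv, h3, h4, h5, h6, h7, h8⟩ :=
      completeness hsum p0 hp0 hx0 hxe he2 ha0 hab hrel hε
    have hQr : (0 : ℝ) < Q := by exact_mod_cast hQ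
    have hsr := summable_of_le_half hsum (t := (P : ℝ) / Q) (by positivity) h7
    have hss := summable_of_le_half hsum (t := (P' : ℝ) / Q) (by positivity) h8
    have lim1 := hsum.hasSum.comp hF
    have lim2 := hss.hasSum.comp hF
    have hwW : (w : ℝ) / 2 ^ (M * j) < W := by rw [div_lt_iff₀ h2m]; exact hw1
    obtain ⟨k, hk1, hk2⟩ := ((lim1.eventually_const_lt hwW).and (lim2.eventually_const_lt h6)).exists
    simp only [Function.comp_apply] at hk1 hk2
    have hk3 : ∑ p ∈ F k, ((P : ℝ) / Q) ^ (p : List Bool).length < Zx + (1 / 2) ^ (K * j) :=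
      (hsr.sum_le_tsum (F k) fun _ _ => by positivity).trans_lt h5
    obtain ⟨N, ⟨hN1, hN2⟩, hN3⟩ := (((eventually_linear hk3 4).and
      (eventually_linear hk2 4)).and (eventually_linear h4 (4 * v + 4 * u))).exists
    have hfr : ∃ s : List Bool, ∀ i < k, ¬ Code.evaln k c i = some (encode s) := by
      by_contra hc
      push Not at hc
      choose f hf1 hf2 using hc
      have hinj : Function.Injective f := by
        intro s t hst
        have h1 := hf2 s
        rw [hst, hf2 t] at h1
        exact (encode_injective (Option.some.inj h1)).symm
      have hfin : (Set.range f).Finite := (Set.finite_lt_nat k).subset (by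
        rintro _ ⟨s, rfl⟩; exact hf1 s)
      exact (Set.infinite_range_of_injective hinj) hfin
    obtain ⟨s, hs⟩ := hfr
    have hQk : (0 : ℝ) < (Q : ℝ) ^ k := by positivity
    refine ⟨(s, k, P, P', Q, u, v, N), (chk_iff ..).2 ?_⟩
    rw [hpj, hpw]
    refine ⟨hplen, hQ, hv, ?_, ?_, h3, ?_, ?_, hs⟩
    · have hS := hFs k 1 2 (by norm_num)
      have : (w : ℝ) * 2 ^ k < stageSum c k 1 2 * 2 ^ (M * j) := by
        rw [hS]
        rw [div_lt_iff₀ h2m] at hk1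
        have h2k : (0 : ℝ) < 2 ^ k := by positivity
        push_cast
        nlinarith
      exact_mod_cast this
    · have hS := hFs k P Q hQ
      have hg := (hgx' N).2
      have : (stageSum c k P Q : ℝ) * 2 ^ (K * j) * (N + 1) + 2 * (Q ^ k * 2 ^ (K * j)) ≤
          gx N * (Q ^ k * 2 ^ (K * j)) + Q ^ k * (N + 1) := by
        rw [hS]
        set sig := ∑ p ∈ F k, ((P : ℝ) / Q) ^ (p : List Bool).length
        have e1 : sig * (N + 1) + 2 ≤ gx N + (1 / 2) ^ (K * j) * (N + 1) := by linarith
        have e2 := mul_le_mul_of_nonneg_left e1 (mul_pos hQk h2n).le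
        have e3 : (Q : ℝ) ^ k * 2 ^ (K * j) * (gx N + (1 / 2) ^ (K * j) * (N + 1)) =
            gx N * (Q ^ k * 2 ^ (K * j)) + Q ^ k * (N + 1) * ((1 / 2) ^ (K * j) * 2 ^ (K * j)) := by
          ring
        rw [e3, hε2] at e2
        linarith
      exact_mod_cast this
    · have g1 := (hga' N).1
      have g2 := (hgb' N).2
      have hv0 : (0 : ℝ) ≤ v := by positivity
      have hu0 : (0 : ℝ) ≤ u := by positivity
      have : ((ga N : ℝ) + 2) * v + 2 * u ≤ gb N * u := by
        nlinarith [mul_le_mul_of_nonneg_right g1 hv0, mul_le_mul_of_nonneg_right g2 hu0]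
      exact_mod_cast this
    · have hS := hFs k P' Q hQ
      have hg := (hgy' N).1
      have : ((gy N : ℝ) + 2) * Q ^ k ≤ stageSum c k P' Q * (N + 1) := by
        rw [hS]
        set sig := ∑ p ∈ F k, ((P' : ℝ) / Q) ^ (p : List Bool).length
        have e1 : (gy N : ℝ) + 2 ≤ sig * (N + 1) := by linarith
        have e2 := mul_le_mul_of_nonneg_left e1 hQk.le
        linarith
      exact_mod_cast this
  -- use soundness
  obtain ⟨s, hs⟩ := Part.dom_iff_mem.1 hdom
  obtain ⟨⟨s', k, P, P', Q, u, v, N⟩, hwit, rfl⟩ := hC1 p s hs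
  obtain ⟨q, hq, hqlen⟩ := hd p _ hs
  simp only at hq
  rw [chk_iff, hpj, hpw] at hwit
  obtain ⟨-, hQ, hv, t1, t2, t3, t4, t5, t6⟩ := hwit
  have hQr : (0 : ℝ) < Q := by exact_mod_cast hQ
  have hQk : (0 : ℝ) < (Q : ℝ) ^ k := by positivity
  have hN1 : (0 : ℝ) < (N : ℝ) + 1 := by positivity
  have hlong := hj (F k) ((P : ℝ) / Q) ((P' : ℝ) / Q) u v (by positivity) (by positivity) hv
    ?_ ?_ ?_ ?_ ?_ ⟨q, Part.dom_iff_mem.2 ⟨_, hq⟩⟩ ?_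
  · simp only at hlong
    omega
  · have hS := hFs k 1 2 (by norm_num)
    have t1' : (w : ℝ) * 2 ^ k < stageSum c k 1 2 * 2 ^ (M * j) := by exact_mod_cast t1
    rw [hS] at t1'
    push_cast at t1'
    have h2k : (0 : ℝ) < 2 ^ k := by positivity
    set sig := ∑ p ∈ F k, (1 / 2 : ℝ) ^ (p : List Bool).length
    have t1'' : (w : ℝ) < sig * 2 ^ (M * j) := by
      refine lt_of_mul_lt_mul_right (a := (2 : ℝ) ^ k) ?_ h2k.le; linarith
    refine le_of_mul_le_mul_right (a := (2 : ℝ) ^ (M * j)) ?_ h2m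
    rw [add_mul, hδ2]
    linarith
  · have hS := hFs k P Q hQ
    have hg := (hgx' N).1
    have t2' : (stageSum c k P Q : ℝ) * 2 ^ (K * j) * (N + 1) + 2 * (Q ^ k * 2 ^ (K * j)) ≤
        gx N * (Q ^ k * 2 ^ (K * j)) + Q ^ k * (N + 1) := by exact_mod_cast t2
    rw [hS] at t2'
    set sig := ∑ p ∈ F k, ((P : ℝ) / Q) ^ (p : List Bool).length
    have e0 : (Q : ℝ) ^ k * 2 ^ (K * j) * (gx N + (1 / 2) ^ (K * j) * (N + 1)) =
        gx N * (Q ^ k * 2 ^ (K * j)) + Q ^ k * (N + 1) * ((1 / 2) ^ (K * j) * 2 ^ (K * j)) := by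
      ring
    rw [hε2, mul_one] at e0
    have e1 : sig * (N + 1) + 2 ≤ gx N + (1 / 2) ^ (K * j) * (N + 1) := by
      refine le_of_mul_le_mul_left (a := (Q : ℝ) ^ k * 2 ^ (K * j)) ?_ (mul_pos hQk h2n)
      rw [e0]; linarith
    refine le_of_mul_le_mul_right (a := (N : ℝ) + 1) ?_ hN1
    linarith
  · have t3' : (P' : ℝ) ^ v * Q ^ u ≤ P ^ u * Q ^ v := by exact_mod_cast t3
    rw [div_pow, div_pow, div_le_div_iff₀ (by positivity) (by positivity)]
    exact t3'
  · have g1 := (hga' N).2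
    have g2 := (hgb' N).1
    have hv0 : (0 : ℝ) ≤ v := by positivity
    have hu0 : (0 : ℝ) ≤ u := by positivity
    have t4' : ((ga N : ℝ) + 2) * v + 2 * u ≤ gb N * u := by exact_mod_cast t4
    refine le_of_mul_le_mul_right (a := (N : ℝ) + 1) ?_ hN1
    nlinarith [mul_le_mul_of_nonneg_right g1 hv0, mul_le_mul_of_nonneg_right g2 hu0]
  · have hS := hFs k P' Q hQ
    have hg := (hgy' N).2
    have t5' : ((gy N : ℝ) + 2) * Q ^ k ≤ stageSum c k P' Q * (N + 1) := by exact_mod_cast t5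
    rw [hS] at t5'
    set sig := ∑ p ∈ F k, ((P' : ℝ) / Q) ^ (p : List Bool).length
    have e1 : (gy N : ℝ) + 2 ≤ sig * (N + 1) := by
      refine le_of_mul_le_mul_left (a := (Q : ℝ) ^ k) ?_ hQk
      linarith
    refine le_of_mul_le_mul_right (a := (N : ℝ) + 1) ?_ hN1
    linarith
  · intro hmem
    obtain ⟨i, hi, hi2⟩ := hFo k _ _ hmem hq
    exact t6 i hi hi2

end Core

theorem scaled_fixed_point_sets_disjoint (U : List Bool →. List Bool)
    (hU : OptimalMachine U) (a b : ℝ)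
    (ha : ComputableReal a) (hb : ComputableReal b)
    (ha0 : 0 < a) (ha1 : a ≤ 1) (hb0 : 0 < b) (hb1 : b ≤ 1) (hab : a ≠ b) :
    Disjoint {T : ℝ | T ∈ Set.Ioo (0 : ℝ) 1 ∧ ComputableReal (Zfun U (a * T))}
             {T : ℝ | T ∈ Set.Ioo (0 : ℝ) 1 ∧ ComputableReal (Zfun U (b * T))} := by
  rw [Set.disjoint_left]
  rintro T ⟨⟨hT0, hT1⟩, hZa⟩ ⟨_, hZb⟩
  rcases lt_or_gt_of_ne hab with h | h
  · exact core hU ha hb ha0 h hb1 hT0 hT1 hZa hZb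
  · exact core hU hb ha hb0 h ha1 hT0 hT1 hZb hZa
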